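/- arXiv:1909.06568 — 2 statements merged into one kernel-verified Lean document; each statement's English description precedes it below -/
import Mathlib

section
/- Let ω = ω(n) be any function tending to infinity as n → ∞, and suppose d = p(n−1) ≥ ω log n. Then asymptotically almost surely the random graph G = G(n,p) has the following property: every set S ⊆ V(G) of cardinality s = |S| ≤ n/(dω) satisfies |N(S)| = sd(1 + O(ω^{-1/2})) ∼ sd, where the constant implicit in the O(·) does not depend on the choice of S. -/
open Finset Filter Real
open scoped Classical

namespace PZF

variable {V : Type*} [Fintype V] [DecidableEq V]

/-- The closed degree of `u` into the set `B`, i.e. `|N[u] ∩ B|`. -/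
noncomputable def closedDegIn (G : SimpleGraph V) (B : Finset V) (u : V) : ℕ :=
  ((insert u (G.neighborSet u)) ∩ (B : Set V)).ncard

/-- The degree of `u` in `G`. -/
noncomputable def deg (G : SimpleGraph V) (u : V) : ℕ :=
  (G.neighborSet u).ncard

/-- The probability that the blue vertex `u` forces its white neighbour `v` in one round of
probabilistic zero forcing, when the current blue set is `B`: it equals `|N[u] ∩ B| / deg u`
when `u` is blue, `v` is a white neighbour of `u`, and `0` otherwise. -/
noncomputable def edgeForceProb (G : SimpleGraph V) (B : Finset V) (u v : V) : ℝ :=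
  if G.Adj u v ∧ u ∈ B ∧ v ∉ B then (closedDegIn G B u : ℝ) / (deg G u : ℝ) else 0

/-- Given per-ordered-pair forcing probabilities `q u v` (each attempt independent), the
probability that one round starting from the blue set `B` produces exactly the blue set `B'`. -/
noncomputable def stepOfQ (q : V → V → ℝ) (B B' : Finset V) : ℝ :=
  if B ⊆ B' then
    (∏ v ∈ B' \ B, (1 - ∏ u ∈ B, (1 - q u v))) * ∏ v ∈ B'ᶜ, ∏ u ∈ B, (1 - q u v)
  else 0

/-- The transition rule of standard probabilistic zero forcing, as a function of the history
(the list of blue sets so far; only the current blue set matters). -/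
noncomputable def stdStep (G : SimpleGraph V) (hist : List (Finset V)) (B' : Finset V) : ℝ :=
  stepOfQ (edgeForceProb G (hist.getLastD ∅)) (hist.getLastD ∅) B'

/-- Probability of a given future trajectory, given the history so far. -/
noncomputable def seqProbAux (step : List (Finset V) → Finset V → ℝ) :
    List (Finset V) → List (Finset V) → ℝ
  | _, [] => 1
  | hist, B :: rest => step hist B * seqProbAux step (hist ++ [B]) rest

/-- The probability that, running the process given by the transition rule `step` from the
initial blue set `S` for `ℓ` rounds, the resulting trajectory (including the initial set)
satisfies the predicate `E`. -/
noncomputable def trajEventProb (step : List (Finset V) → Finset V → ℝ) (S : Finset V)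
    (ℓ : ℕ) (E : List (Finset V) → Prop) : ℝ :=
  ∑ f : Fin ℓ → Finset V,
    if E (S :: List.ofFn f) then seqProbAux step [S] (List.ofFn f) else 0

/-- `P(A(S,T,ℓ))`: the probability that, starting probabilistic zero forcing from the blue
set `S`, after `ℓ` rounds every vertex of `T` is blue. -/
noncomputable def probForced (G : SimpleGraph V) (S T : Finset V) (ℓ : ℕ) : ℝ :=
  trajEventProb (stdStep G) S ℓ fun traj => T ⊆ traj.getLastD ∅

/-- `P(pt_pzf(G,S) ≤ ℓ)`: the probability that all vertices are blue after `ℓ` rounds. -/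
noncomputable def probAllBlue (G : SimpleGraph V) (S : Finset V) (ℓ : ℕ) : ℝ :=
  probForced G S Finset.univ ℓ

/-- The probability of a fixed graph `G` under the Erdős–Rényi measure `G(n,p)`. -/
noncomputable def erProb (n : ℕ) (p : ℝ) (G : SimpleGraph (Fin n)) : ℝ :=
  p ^ G.edgeSet.ncard * (1 - p) ^ (n.choose 2 - G.edgeSet.ncard)

/-- The probability that `G(n,p)` satisfies the property `E`. -/
noncomputable def graphProb (n : ℕ) (p : ℝ) (E : SimpleGraph (Fin n) → Prop) : ℝ :=
  ∑ G : SimpleGraph (Fin n), if E G then erProb n p G else 0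

/-- `P(pt_pzf(G(n,p), v) ≤ ℓ)`: the joint probability (over the random graph and the forcing
randomness) that probabilistic zero forcing started at `{v}` turns all of `G(n,p)` blue
within `ℓ` rounds. -/
noncomputable def prPZFwithin (n : ℕ) (p : ℝ) (v : Fin n) (ℓ : ℕ) : ℝ :=
  ∑ G : SimpleGraph (Fin n), erProb n p G * probAllBlue G {v} ℓ

/-- The external neighbourhood `N(S) = (⋃ v ∈ S, N(v)) \\ S` of a finset of vertices. -/
noncomputable def extN (G : SimpleGraph V) (S : Finset V) : Finset V :=
  Finset.univ.filter fun v => v ∉ S ∧ ∃ u ∈ S, G.Adj u v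

end PZF


namespace ERX

open PZF

lemma sum_graph (n : ℕ) (f : SimpleGraph (Fin n) → ℝ) :
    ∑ G : SimpleGraph (Fin n), f G =
      ∑ B ∈ (Finset.univ.filter fun e : Sym2 (Fin n) => ¬ e.IsDiag).powerset,
        f (SimpleGraph.fromEdgeSet (B : Set (Sym2 (Fin n)))) := by
  refine Finset.sum_bij' (fun G _ => Finset.univ.filter fun e => e ∈ G.edgeSet)
    (fun B _ => SimpleGraph.fromEdgeSet (B : Set (Sym2 (Fin n)))) ?_ ?_ ?_ ?_ ?_
  · intro G _
    simp only [Finset.mem_powerset]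
    intro e he
    simp only [Finset.mem_filter, Finset.mem_univ, true_and] at he ⊢
    exact G.not_isDiag_of_mem_edgeSet he
  · intro B _
    exact Finset.mem_univ _
  · intro G _
    simp
  · intro B hB
    ext e
    simp only [Finset.mem_powerset] at hB
    simp only [Finset.mem_filter, Finset.mem_univ, true_and, SimpleGraph.edgeSet_fromEdgeSet,
      Set.mem_sdiff, Finset.mem_coe]
    constructor
    · exact fun h => h.1
    · intro h
      refine ⟨h, ?_⟩
      have := hB h
      simpa using this
  · intro G _
    simp

lemma card_nondiag (n : ℕ) :
    (Finset.univ.filter fun e : Sym2 (Fin n) => ¬ e.IsDiag).card = n.choose 2 := by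
  have := Sym2.card_subtype_not_diag (α := Fin n)
  rw [Fintype.card_subtype] at this
  simpa using this

lemma er_avoid (n : ℕ) (p : ℝ) (A : Finset (Sym2 (Fin n))) (hA : ∀ e ∈ A, ¬ e.IsDiag) :
    ∑ G : SimpleGraph (Fin n), erProb n p G * (if ∀ e ∈ A, e ∉ G.edgeSet then 1 else 0)
      = (1 - p) ^ A.card := by
  rw [sum_graph]
  set E := (Finset.univ.filter fun e : Sym2 (Fin n) => ¬ e.IsDiag) with hE
  have hAE : A ⊆ E := fun e he => by simp [hE, hA e he]
  have hcard : E.card = n.choose 2 := card_nondiag n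
  have hsub : (E \ A).powerset ⊆ E.powerset := Finset.powerset_mono.2 Finset.sdiff_subset
  have key : ∀ B ∈ E.powerset, (SimpleGraph.fromEdgeSet (B : Set (Sym2 (Fin n)))).edgeSet
      = (B : Set (Sym2 (Fin n))) := by
    intro B hB
    rw [Finset.mem_powerset] at hB
    ext e
    simp only [SimpleGraph.edgeSet_fromEdgeSet, Set.mem_sdiff, Finset.mem_coe]
    constructor
    · exact fun h => h.1
    · intro h
      refine ⟨h, ?_⟩
      have := hB h
      simpa [hE] using this
  rw [← Finset.sum_subset hsub]
  · have h1 := Finset.sum_pow_mul_eq_add_pow p (1 - p) (E \ A)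
    have hAc : A.card ≤ E.card := Finset.card_le_card hAE
    have hc : (E \ A).card = E.card - A.card := Finset.card_sdiff_of_subset hAE
    calc _ = ∑ B ∈ (E \ A).powerset, (1 - p) ^ A.card *
            (p ^ B.card * (1 - p) ^ ((E \ A).card - B.card)) := by
          refine Finset.sum_congr rfl fun B hB => ?_
          have hB' := hsub hB
          rw [Finset.mem_powerset] at hB
          rw [if_pos, erProb, key B hB', Set.ncard_coe_finset, ← hcard, mul_one]
          · have hBc := Finset.card_le_card hB
            have : E.card - B.card = A.card + ((E \ A).card - B.card) := by omega
            rw [this, pow_add]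
            ring
          · intro e he
            rw [key B hB']
            intro heB
            have := hB heB
            simp [he] at this
      _ = _ := by
          rw [← Finset.mul_sum, h1]
          simp
  · intro B hB hB'
    rw [if_neg, mul_zero]
    intro h
    apply hB'
    rw [Finset.mem_powerset] at hB ⊢
    intro e he
    rw [Finset.mem_sdiff]
    refine ⟨hB he, fun heA => h e heA ?_⟩
    rw [key B (Finset.mem_powerset.2 hB)]
    exact he

lemma er_total (n : ℕ) (p : ℝ) : ∑ G : SimpleGraph (Fin n), erProb n p G = 1 := by
  have := er_avoid n p ∅ (by simp)
  simpa using this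

/-- edges between S and T -/
noncomputable def cross {n : ℕ} (S T : Finset (Fin n)) : Finset (Sym2 (Fin n)) :=
  (S ×ˢ T).image fun x => s(x.1, x.2)

lemma cross_card {n : ℕ} (S T : Finset (Fin n)) (h : Disjoint S T) :
    (cross S T).card = S.card * T.card := by
  rw [cross, Finset.card_image_of_injOn, Finset.card_product]
  rintro ⟨a, b⟩ hab ⟨c, d⟩ hcd he
  simp only [Finset.coe_product, Set.mem_prod, Finset.mem_coe] at hab hcd
  simp only [Sym2.eq_iff] at he
  rcases he with ⟨h1, h2⟩ | ⟨h1, h2⟩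
  · rw [h1, h2]
  · subst h1
    exact absurd hcd.2 (Finset.disjoint_left.1 h hab.1)

lemma pow_extN {n : ℕ} (G : SimpleGraph (Fin n)) (S : Finset (Fin n)) (z : ℝ) :
    z ^ (extN G S).card = ∑ T ∈ Sᶜ.powerset, (1 - z) ^ T.card * z ^ (Sᶜ.card - T.card) *
      (if ∀ e ∈ cross S T, e ∉ G.edgeSet then 1 else 0) := by
  have h1 : z ^ (extN G S).card =
      ∏ v ∈ Sᶜ, ((1 - z) * (if ∀ u ∈ S, ¬ G.Adj u v then 1 else 0) + z) := by
    have : extN G S = Sᶜ.filter fun v => ∃ u ∈ S, G.Adj u v := by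
      ext v; simp [extN]
    rw [this, ← Finset.prod_const, Finset.prod_filter]
    refine Finset.prod_congr rfl fun v _ => ?_
    by_cases h : ∃ u ∈ S, G.Adj u v
    · rw [if_pos h, if_neg (by push Not; exact h)]; ring
    · rw [if_neg h, if_pos (by push Not at h; exact h)]; ring
  rw [h1, Finset.prod_add]
  refine Finset.sum_congr rfl fun T hT => ?_
  rw [Finset.mem_powerset] at hT
  rw [Finset.prod_const, Finset.card_sdiff_of_subset hT, Finset.prod_mul_distrib,
    Finset.prod_const, Finset.prod_boole]
  have : (∀ i ∈ T, ∀ u ∈ S, ¬ G.Adj u i) ↔ (∀ e ∈ cross S T, e ∉ G.edgeSet) := by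
    simp only [cross, Finset.mem_image, Finset.mem_product]
    constructor
    · rintro h e ⟨⟨a, b⟩, hab, rfl⟩
      exact h b hab.2 a hab.1
    · intro h v hv u hu
      exact h _ ⟨(u, v), ⟨hu, hv⟩, rfl⟩
  simp only [this]
  ring

lemma mgf (n : ℕ) (p : ℝ) (S : Finset (Fin n)) (z : ℝ) :
    ∑ G : SimpleGraph (Fin n), erProb n p G * z ^ (extN G S).card =
      ((1 - z) * (1 - p) ^ S.card + z) ^ (Sᶜ.card) := by
  simp_rw [pow_extN, Finset.mul_sum]
  rw [Finset.sum_comm, ← Finset.sum_pow_mul_eq_add_pow]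
  refine Finset.sum_congr rfl fun T hT => ?_
  rw [Finset.mem_powerset] at hT
  have hd : Disjoint S T := by
    rw [Finset.disjoint_left]
    intro a ha hb
    have := hT hb
    simp [ha] at this
  have h := er_avoid n p (cross S T) (by
    intro e he
    simp only [cross, Finset.mem_image, Finset.mem_product] at he
    obtain ⟨⟨a, b⟩, hab, rfl⟩ := he
    simp only [Sym2.mk_isDiag_iff]
    rintro rfl
    exact Finset.disjoint_left.1 hd hab.1 hab.2)
  rw [cross_card S T hd] at h
  calc _ = ((1 - z) ^ T.card * z ^ (Sᶜ.card - T.card)) * ∑ G : SimpleGraph (Fin n),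
        erProb n p G * (if ∀ e ∈ cross S T, e ∉ G.edgeSet then 1 else 0) := by
        rw [Finset.mul_sum]
        refine Finset.sum_congr rfl fun G _ => ?_
        ring
    _ = _ := by
        rw [h, mul_pow, pow_mul]
        ring

lemma erProb_nonneg (n : ℕ) (p : ℝ) (h0 : 0 ≤ p) (h1 : p ≤ 1) (G : SimpleGraph (Fin n)) :
    0 ≤ erProb n p G := by
  have : 0 ≤ 1 - p := by linarith
  unfold erProb
  positivity

lemma chernoff (n : ℕ) (p : ℝ) (h0 : 0 ≤ p) (h1 : p ≤ 1) (S : Finset (Fin n)) (t a : ℝ) :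
    graphProb n p (fun G => t * a ≤ t * ((extN G S).card : ℝ)) ≤
      Real.exp (-(t * a) + (Real.exp t - 1) * ((Sᶜ.card : ℝ) * (1 - (1 - p) ^ S.card))) := by
  have hm := mgf n p S (Real.exp t)
  calc graphProb n p (fun G => t * a ≤ t * ((extN G S).card : ℝ))
      ≤ ∑ G : SimpleGraph (Fin n), Real.exp (-(t * a)) *
          (erProb n p G * Real.exp t ^ (extN G S).card) := by
        unfold graphProb
        refine Finset.sum_le_sum fun G _ => ?_
        have hn := erProb_nonneg n p h0 h1 G
        split_ifs with h
        · have : 1 ≤ Real.exp (-(t * a)) * Real.exp t ^ (extN G S).card := by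
            rw [← Real.exp_nat_mul, ← Real.exp_add]
            apply Real.one_le_exp
            linarith
          calc erProb n p G = erProb n p G * 1 := by ring
            _ ≤ erProb n p G * (Real.exp (-(t * a)) * Real.exp t ^ (extN G S).card) :=
                mul_le_mul_of_nonneg_left this hn
            _ = _ := by ring
        · positivity
    _ = Real.exp (-(t * a)) *
        ((1 - Real.exp t) * (1 - p) ^ S.card + Real.exp t) ^ (Sᶜ.card) := by
        rw [← Finset.mul_sum, hm]
    _ ≤ Real.exp (-(t * a)) *
        Real.exp ((Real.exp t - 1) * (1 - (1 - p) ^ S.card)) ^ (Sᶜ.card) := by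
        have hq0 : 0 ≤ (1 - p) ^ S.card := pow_nonneg (by linarith) _
        have hq1 : (1 - p) ^ S.card ≤ 1 := pow_le_one₀ (by linarith) (by linarith)
        have he := Real.exp_pos t
        gcongr
        · nlinarith
        · have := Real.add_one_le_exp ((Real.exp t - 1) * (1 - (1 - p) ^ S.card))
          nlinarith
    _ = _ := by
        rw [← Real.exp_nat_mul, ← Real.exp_add]
        congr 1
        ring

set_option maxHeartbeats 1600000 in
lemma tail (n : ℕ) (p w : ℝ) (h0 : 0 ≤ p) (h1 : p ≤ 1) (hn : 2 ≤ n) (hw : 4 ≤ w)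
    (hd : 1 ≤ p * ((n : ℝ) - 1)) (S : Finset (Fin n)) (hS : 1 ≤ S.card)
    (hs : (S.card : ℝ) ≤ (n : ℝ) / (p * ((n : ℝ) - 1) * w)) :
    graphProb n p (fun G => ¬ |((extN G S).card : ℝ) - (S.card : ℝ) * (p * ((n : ℝ) - 1))| ≤
              10 * ((S.card : ℝ) * (p * ((n : ℝ) - 1))) / Real.sqrt w) ≤
      2 * Real.exp (-3 * ((S.card : ℝ) * (p * ((n : ℝ) - 1)) / w)) := by
  have hw0 : 0 < w := by linarith
  set t : ℝ := (Real.sqrt w)⁻¹ with ht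
  have hsw : 2 ≤ Real.sqrt w := Real.le_sqrt_of_sq_le (by linarith)
  have ht0 : 0 < t := by positivity
  have ht1 : t ≤ 1 / 2 := by
    rw [ht, inv_le_comm₀ (by positivity) (by norm_num)]
    norm_num; exact hsw
  have htw : t ^ 2 = w⁻¹ := by rw [ht, inv_pow, Real.sq_sqrt hw0.le]
  have htw1 : t ^ 2 * w = 1 := by rw [htw]; field_simp
  have hn' : (2 : ℝ) ≤ n := by exact_mod_cast hn
  have hs1 : (1 : ℝ) ≤ S.card := by exact_mod_cast hS
  set s : ℝ := (S.card : ℝ) with hsdef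
  set d : ℝ := p * ((n : ℝ) - 1) with hddef
  have hcompl : (Sᶜ.card : ℝ) = n - s := by
    rw [Finset.card_compl, Nat.cast_sub (Finset.card_le_univ S)]
    simp [hsdef]
  have hsn : s ≤ n := by
    have := Finset.card_le_univ S
    simp only [Fintype.card_fin] at this
    rw [hsdef]
    exact_mod_cast this
  have hs' : s * (d * w) ≤ n := by
    rwa [le_div_iff₀ (by positivity)] at hs
  have hsp : s * p ≤ 2 * t ^ 2 := by
    have h3 : s * p * w * (n - 1) ≤ 2 * (n - 1) := by
      have : s * p * w * (n - 1) = s * (d * w) := by rw [hddef]; ring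
      linarith
    have h4 : s * p * w ≤ 2 := le_of_mul_le_mul_right h3 (by linarith)
    rw [htw, ← div_eq_mul_inv, le_div_iff₀ hw0]
    exact h4
  have hsp0 : 0 ≤ s * p := by positivity
  have hsnn : s ≤ 2 * t ^ 2 * (n - 1) := by
    have h3 : s * w ≤ n := by
      refine le_trans ?_ hs'
      have : w ≤ d * w := by nlinarith
      nlinarith
    have h4 : s = s * w * t ^ 2 := by
      calc s = s * (t ^ 2 * w) := by rw [htw1]; ring
        _ = _ := by ring
    rw [h4]
    have : (0:ℝ) ≤ t ^ 2 := by positivity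
    nlinarith
  set q : ℝ := 1 - (1 - p) ^ S.card with hq
  have hqu : q ≤ s * p := by
    have := one_add_mul_le_pow (a := -p) (by linarith) S.card
    rw [hq]
    have h5 : 1 + -p = 1 - p := by ring
    rw [h5] at this
    linarith
  have hql : s * p * (1 - s * p) ≤ q := by
    have h5 : (1 - p) ^ S.card ≤ Real.exp (-(s * p)) := by
      calc (1 - p) ^ S.card ≤ Real.exp (-p) ^ S.card := by
            have := Real.add_one_le_exp (-p)
            exact pow_le_pow_left₀ (by linarith) (by linarith) _
        _ = _ := by rw [← Real.exp_nat_mul]; congr 1; ring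
    have h6 := Real.abs_exp_sub_one_sub_id_le (x := -(s * p)) (by
      rw [abs_neg, abs_of_nonneg hsp0]; nlinarith)
    have h7 := (abs_le.1 h6).2
    rw [hq]; nlinarith
  have hsd : 0 < s * d := by positivity
  have hq0 : 0 ≤ q := by
    have : (0:ℝ) ≤ 1 - s * p := by nlinarith
    have : 0 ≤ s * p * (1 - s * p) := by positivity
    linarith
  have hμu : (n - s) * q ≤ s * d := by
    calc (n - s) * q ≤ (n - 1) * (s * p) := by
          apply mul_le_mul <;> linarith
      _ = _ := by rw [hddef]; ring
  have hμl : s * d * (1 - 4 * t ^ 2) ≤ (n - s) * q := by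
    have ht2 : t ^ 2 ≤ 1 / 4 := by nlinarith
    calc s * d * (1 - 4 * t ^ 2) ≤ s * d * ((1 - 2 * t ^ 2) * (1 - 2 * t ^ 2)) := by
          apply mul_le_mul_of_nonneg_left _ hsd.le
          nlinarith [sq_nonneg (t ^ 2)]
      _ = ((n - 1) * (1 - 2 * t ^ 2)) * (s * p * (1 - 2 * t ^ 2)) := by rw [hddef]; ring
      _ ≤ (n - s) * q := by
          apply mul_le_mul
          · linarith
          · refine le_trans ?_ hql
            apply mul_le_mul_of_nonneg_left _ hsp0
            linarith
          · apply mul_nonneg hsp0; linarith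
          · linarith
  have hU := chernoff n p h0 h1 S t (s * d + 10 * (s * d) * t)
  have hL := chernoff n p h0 h1 S (-t) (s * d - 10 * (s * d) * t)
  rw [hcompl] at hU hL
  have heU := (abs_le.1 (Real.abs_exp_sub_one_sub_id_le (x := t) (by
      rw [abs_of_pos ht0]; linarith))).2
  have heL := (abs_le.1 (Real.abs_exp_sub_one_sub_id_le (x := -t) (by
      rw [abs_neg, abs_of_pos ht0]; linarith))).2
  have hU' : -(t * (s * d + 10 * (s * d) * t)) + (Real.exp t - 1) * ((n - s) * q) ≤
      -3 * (s * d / w) := by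
    have h8 : (Real.exp t - 1) * ((n - s) * q) ≤ (t + t ^ 2) * (s * d) := by
      apply mul_le_mul
      · linarith
      · exact hμu
      · apply mul_nonneg _ hq0; linarith
      · positivity
    rw [div_eq_mul_inv, ← htw]
    linarith [mul_pos hsd (pow_pos ht0 2)]
  have hL' : -(-t * (s * d - 10 * (s * d) * t)) + (Real.exp (-t) - 1) * ((n - s) * q) ≤
      -3 * (s * d / w) := by
    have hμ0 : 0 ≤ (n - s) * q := mul_nonneg (by linarith) hq0
    have h8 : (Real.exp (-t) - 1) * ((n - s) * q) ≤ (-t + t ^ 2) * ((n - s) * q) := by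
      apply mul_le_mul_of_nonneg_right _ hμ0
      linarith
    have h9 : (t - t ^ 2) * (s * d * (1 - 4 * t ^ 2)) ≤ (t - t ^ 2) * ((n - s) * q) := by
      apply mul_le_mul_of_nonneg_left hμl
      nlinarith
    have h10 : 0 ≤ (s * d) * (t ^ 2 * (2 - 4 * t + 4 * t ^ 2)) := by
      apply mul_nonneg hsd.le
      apply mul_nonneg (by positivity)
      nlinarith
    have h11 := mul_pos hsd (pow_pos ht0 2)
    rw [div_eq_mul_inv, ← htw]
    linarith
  have hsum : graphProb n p (fun G => ¬ |((extN G S).card : ℝ) - s * d| ≤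
              10 * (s * d) / Real.sqrt w) ≤
      graphProb n p (fun G => t * (s * d + 10 * (s * d) * t) ≤ t * ((extN G S).card : ℝ)) +
      graphProb n p (fun G => -t * (s * d - 10 * (s * d) * t) ≤ -t * ((extN G S).card : ℝ)) := by
    unfold graphProb
    rw [← Finset.sum_add_distrib]
    refine Finset.sum_le_sum fun G _ => ?_
    have hnn := erProb_nonneg n p h0 h1 G
    by_cases hb : ¬ |((extN G S).card : ℝ) - s * d| ≤ 10 * (s * d) / Real.sqrt w
    · rw [if_pos hb]
      rw [div_eq_mul_inv, ← ht, not_le, lt_abs] at hb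
      rcases hb with hb | hb
      · rw [if_pos (mul_le_mul_of_nonneg_left (by linarith) ht0.le)]
        split_ifs <;> linarith
      · rw [if_pos (c := -t * (s * d - 10 * (s * d) * t) ≤ -t * ((extN G S).card : ℝ))
          (mul_le_mul_of_nonpos_left (by linarith) (by linarith))]
        split_ifs <;> linarith
    · rw [if_neg hb]
      split_ifs <;> linarith
  have e1 := Real.exp_le_exp.2 hU'
  have e2 := Real.exp_le_exp.2 hL'
  linarith

lemma union_bound (n : ℕ) (p : ℝ) (h0 : 0 ≤ p) (h1 : p ≤ 1)
    (P : SimpleGraph (Fin n) → Finset (Fin n) → Prop) :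
    1 - ∑ S : Finset (Fin n), graphProb n p (fun G => ¬ P G S) ≤
      graphProb n p (fun G => ∀ S, P G S) := by
  rw [← er_total n p]
  unfold graphProb
  rw [Finset.sum_comm, ← Finset.sum_sub_distrib]
  refine Finset.sum_le_sum fun G _ => ?_
  have hnn := erProb_nonneg n p h0 h1 G
  beta_reduce
  have hterm : ∀ S ∈ (Finset.univ : Finset (Finset (Fin n))),
      0 ≤ (@ite ℝ (¬ P G S) (Classical.propDecidable _) (erProb n p G) 0) := by
    intro S _
    split_ifs <;> linarith
  by_cases h : ∀ S, P G S
  · rw [if_pos h]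
    have := Finset.sum_nonneg hterm
    linarith
  · rw [if_neg h]
    push Not at h
    obtain ⟨S, hS⟩ := h
    have := Finset.single_le_sum hterm (Finset.mem_univ S)
    rw [if_pos hS] at this
    linarith

lemma le_one (n : ℕ) (p : ℝ) (h0 : 0 ≤ p) (h1 : p ≤ 1) (P : SimpleGraph (Fin n) → Prop) :
    graphProb n p P ≤ 1 := by
  rw [← er_total n p]
  unfold graphProb
  refine Finset.sum_le_sum fun G _ => ?_
  have hnn := erProb_nonneg n p h0 h1 G
  split_ifs <;> linarith

lemma main_bound (n : ℕ) (p w : ℝ) (h0 : 0 ≤ p) (h1 : p ≤ 1) (hn : 3 ≤ n) (hw : 4 ≤ w)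
    (hd : w * Real.log n ≤ p * ((n : ℝ) - 1)) :
    1 - 4 / (n : ℝ) ≤ graphProb n p fun G =>
          ∀ S : Finset (Fin n),
            (S.card : ℝ) ≤ (n : ℝ) / (p * ((n : ℝ) - 1) * w) →
            |((PZF.extN G S).card : ℝ) - (S.card : ℝ) * (p * ((n : ℝ) - 1))| ≤
              10 * ((S.card : ℝ) * (p * ((n : ℝ) - 1))) / Real.sqrt w := by
  have hn' : (3 : ℝ) ≤ n := by exact_mod_cast hn
  have hn0 : (0 : ℝ) < n := by linarith
  have hlog : 1 ≤ Real.log n := by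
    rw [Real.le_log_iff_exp_le hn0]
    linarith [Real.exp_one_lt_d9]
  have hd1 : 1 ≤ p * ((n : ℝ) - 1) := by nlinarith
  have hw0 : 0 < w := by linarith
  refine le_trans ?_ (union_bound n p h0 h1 _)
  set x : ℝ := ((n : ℝ) ^ 3)⁻¹ with hx
  have hx0 : 0 < x := by positivity
  have hterm : ∀ S : Finset (Fin n), graphProb n p (fun G => ¬ ((S.card : ℝ) ≤
      (n : ℝ) / (p * ((n : ℝ) - 1) * w) →
            |((PZF.extN G S).card : ℝ) - (S.card : ℝ) * (p * ((n : ℝ) - 1))| ≤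
              10 * ((S.card : ℝ) * (p * ((n : ℝ) - 1))) / Real.sqrt w)) ≤
      2 * (x ^ S.card * 1 ^ (Fintype.card (Fin n) - S.card)) - (if S = ∅ then 2 else 0) := by
    intro S
    rw [one_pow, mul_one]
    by_cases hS : S = ∅
    · subst hS
      simp [graphProb, extN]
    · rw [if_neg hS, sub_zero]
      by_cases hs : (S.card : ℝ) ≤ (n : ℝ) / (p * ((n : ℝ) - 1) * w)
      · have hS1 : 1 ≤ S.card := Finset.card_pos.2 (Finset.nonempty_iff_ne_empty.2 hS)
        have := tail n p w h0 h1 (by omega) hw hd1 S hS1 hs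
        simp only [hs, true_imp_iff]
        refine this.trans ?_
        have hxe : x = Real.exp (-3 * Real.log n) := by
          have : -3 * Real.log n = -(((3:ℕ):ℝ) * Real.log n) := by push_cast; ring
          rw [this, Real.exp_neg, Real.exp_nat_mul, Real.exp_log hn0]
        rw [hxe, ← Real.exp_nat_mul]
        have h5 : Real.log n ≤ p * ((n : ℝ) - 1) / w := by
          rw [le_div_iff₀ hw0]; linarith
        have h6 : (S.card : ℝ) * Real.log n ≤ (S.card : ℝ) * (p * ((n : ℝ) - 1) / w) := by
          gcongr
        have h7 : (S.card : ℝ) * (p * ((n : ℝ) - 1)) / w =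
          (S.card : ℝ) * (p * ((n : ℝ) - 1) / w) := by ring
        rw [h7]
        have : Real.exp (-3 * ((S.card : ℝ) * (p * ((n : ℝ) - 1) / w))) ≤
            Real.exp ((S.card : ℝ) * (-3 * Real.log n)) := by
          apply Real.exp_le_exp.2
          linarith
        linarith
      · simp only [hs, false_imp_iff, not_true_eq_false]
        simp only [graphProb, if_false, Finset.sum_const_zero]
        positivity
  have hsum := Finset.sum_le_sum fun S (_ : S ∈ (Finset.univ : Finset (Finset (Fin n)))) => hterm S
  rw [Finset.sum_sub_distrib, ← Finset.mul_sum, Fintype.sum_pow_mul_eq_add_pow,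
    Finset.sum_ite_eq' Finset.univ ∅, if_pos (Finset.mem_univ _), Fintype.card_fin] at hsum
  have hb : (x + 1) ^ n ≤ 1 + 2 / n := by
    have hnx : n * x = (n : ℝ)⁻¹ ^ 2 := by rw [hx]; field_simp
    have hinv : (n : ℝ)⁻¹ ≤ 1 := inv_le_one_of_one_le₀ (by linarith)
    have hinv0 : 0 < (n : ℝ)⁻¹ := by positivity
    have hy : (n : ℝ)⁻¹ ^ 2 ≤ (n : ℝ)⁻¹ := by nlinarith
    have h5 := (abs_le.1 (Real.abs_exp_sub_one_sub_id_le (x := n * x) (by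
      rw [hnx, abs_of_pos (by positivity)]; linarith))).2
    have h6 : (x + 1) ^ n ≤ Real.exp (n * x) := by
      rw [Real.exp_nat_mul]
      exact pow_le_pow_left₀ (by linarith) (Real.add_one_le_exp x) _
    rw [hnx] at h5 h6
    rw [div_eq_mul_inv]
    nlinarith
  have : 4 / (n : ℝ) = 2 * (2 / n) := by ring
  linarith

end ERX

/-- If `ω → ∞` and `d = p (n - 1) ≥ ω log n`, then a.a.s. every set `S` of
at most `n / (d ω)` vertices of `G(n,p)` satisfies `|N(S)| = s d (1 + O(ω^{-1/2}))`, with an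
absolute implied constant (independent of `S` and of `n`). -/
theorem er_expansion
    (p ω : ℕ → ℝ) (hp : ∀ n, 0 ≤ p n ∧ p n ≤ 1)
    (hω : Tendsto ω atTop atTop)
    (hd : ∀ᶠ n in atTop, ω n * Real.log n ≤ p n * ((n : ℝ) - 1)) :
    ∃ C : ℝ, 0 < C ∧
      Tendsto
        (fun n => PZF.graphProb n (p n) fun G =>
          ∀ S : Finset (Fin n),
            (S.card : ℝ) ≤ (n : ℝ) / (p n * ((n : ℝ) - 1) * ω n) →
            |((PZF.extN G S).card : ℝ) - (S.card : ℝ) * (p n * ((n : ℝ) - 1))| ≤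
              C * ((S.card : ℝ) * (p n * ((n : ℝ) - 1))) / Real.sqrt (ω n))
        atTop (nhds 1) := by
  refine ⟨10, by norm_num, ?_⟩
  have hlim : Tendsto (fun n : ℕ => 1 - 4 / (n : ℝ)) atTop (nhds 1) := by
    have := (tendsto_const_div_atTop_nhds_zero_nat (4 : ℝ)).const_sub 1
    simpa using this
  refine tendsto_of_tendsto_of_tendsto_of_le_of_le' hlim tendsto_const_nhds ?_ ?_
  · filter_upwards [hd, hω.eventually_ge_atTop 4, eventually_ge_atTop 3] with n h1 h2 h3
    exact ERX.main_bound n (p n) (ω n) (hp n).1 (hp n).2 h3 h2 h1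
  · exact Filter.Eventually.of_forall fun n => ERX.le_one n (p n) (hp n).1 (hp n).2 _
end

section
/- Suppose that p = p(n) ≥ 1/log² n. Then for each vertex v of G(n,p), with probability 1 − o(n^{-1}) the bound pt_pzf(G(n,p), v) ≥ (1+o(1)) log₂ log₂ n holds. -/
open Finset Filter Real
open scoped Classical

namespace PZF

variable {V : Type*} [Fintype V] [DecidableEq V]

lemma edgeForceProb_nonneg (G : SimpleGraph V) (B : Finset V) (u v : V) :
    0 ≤ edgeForceProb G B u v := by
  unfold edgeForceProb
  split_ifs
  · positivity
  · exact le_rfl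

lemma edgeForceProb_le_one (G : SimpleGraph V) (B : Finset V) (u v : V) :
    edgeForceProb G B u v ≤ 1 := by
  unfold edgeForceProb
  split_ifs with h
  · obtain ⟨h1, h2, h3⟩ := h
    apply div_le_one_of_le₀ _ (by positivity)
    norm_cast
    unfold closedDegIn deg
    have hsub : (insert u (G.neighborSet u)) ∩ (B : Set V) ⊆
        insert u (G.neighborSet u \ {v}) := by
      rintro x ⟨hx1, hx2⟩
      rcases hx1 with rfl | hx1
      · simp
      · right
        refine ⟨hx1, ?_⟩
        rintro rfl
        exact h3 (by simpa using hx2)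
    refine (Set.ncard_le_ncard hsub (Set.toFinite _)).trans ?_
    refine (Set.ncard_insert_le _ _).trans ?_
    rw [Set.ncard_diff_singleton_add_one (show v ∈ G.neighborSet u from h1) (Set.toFinite _)]
  · exact zero_le_one

lemma closedDegIn_le (G : SimpleGraph V) (B : Finset V) (u : V) :
    closedDegIn G B u ≤ B.card := by
  unfold closedDegIn
  rw [← Set.ncard_coe_finset B]
  exact Set.ncard_le_ncard Set.inter_subset_right (Set.toFinite _)

lemma sum_edgeForceProb_le (G : SimpleGraph V) (B : Finset V) (u : V) :
    ∑ v ∈ Bᶜ, edgeForceProb G B u v ≤ B.card := by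
  have h1 : ∑ v ∈ Bᶜ, edgeForceProb G B u v ≤
      ∑ v : V, if v ∈ (G.neighborSet u).toFinset then
        (closedDegIn G B u : ℝ) / (deg G u : ℝ) else 0 := by
    refine (Finset.sum_le_sum_of_subset_of_nonneg (Finset.subset_univ _)
      (fun i _ _ => edgeForceProb_nonneg G B u i)).trans ?_
    apply Finset.sum_le_sum
    intro v _
    unfold edgeForceProb
    split_ifs with h h' h'
    · exact le_rfl
    · exact absurd (by simpa using h.1) h'
    · positivity
    · exact le_rfl
  refine h1.trans ?_
  rw [Finset.sum_ite_mem, Finset.univ_inter, Finset.sum_const, nsmul_eq_mul,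
    ← Set.ncard_eq_toFinset_card']
  change (deg G u : ℝ) * _ ≤ _
  have h2 : (closedDegIn G B u : ℝ) ≤ B.card := by exact_mod_cast closedDegIn_le G B u
  by_cases hd : (deg G u : ℝ) = 0
  · rw [hd]; simp
  · rw [mul_div_cancel₀ _ hd]; exact h2

lemma stepOfQ_nonneg {q : V → V → ℝ} (h0 : ∀ u v, 0 ≤ q u v) (h1 : ∀ u v, q u v ≤ 1)
    (B B' : Finset V) : 0 ≤ stepOfQ q B B' := by
  unfold stepOfQ
  split_ifs
  · apply mul_nonneg
    · apply Finset.prod_nonneg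
      intro v _
      have : ∏ u ∈ B, (1 - q u v) ≤ 1 :=
        Finset.prod_le_one (fun u _ => by linarith [h1 u v]) (fun u _ => by linarith [h0 u v])
      linarith
    · exact Finset.prod_nonneg fun v _ => Finset.prod_nonneg fun u _ => by linarith [h1 u v]
  · exact le_rfl

lemma sum_stepOfQ (q : V → V → ℝ) (B : Finset V) (z : ℝ) :
    ∑ B' : Finset V, stepOfQ q B B' * z ^ (B' \ B).card =
      ∏ v ∈ Bᶜ, (z * (1 - ∏ u ∈ B, (1 - q u v)) + ∏ u ∈ B, (1 - q u v)) := by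
  rw [Finset.prod_add]
  symm
  have : ∀ B' : Finset V, stepOfQ q B B' * z ^ (B' \ B).card =
      if B ⊆ B' then ((∏ v ∈ B' \ B, (1 - ∏ u ∈ B, (1 - q u v))) *
        ∏ v ∈ B'ᶜ, ∏ u ∈ B, (1 - q u v)) * z ^ (B' \ B).card else 0 := by
    intro B'
    unfold stepOfQ
    split_ifs <;> simp
  simp_rw [this]
  rw [← Finset.sum_filter]
  refine Finset.sum_bij' (fun t _ => t ∪ B) (fun B' _ => B' \ B) ?_ ?_ ?_ ?_ ?_
  · intro t ht; simp
  · intro t ht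
    simp only [Finset.mem_powerset]
    intro x hx
    simp at hx ⊢
    exact hx.2
  · intro t ht
    simp only [Finset.mem_powerset] at ht
    ext x
    have := @ht x
    simp at this ⊢
    tauto
  · intro t ht
    simp at ht
    ext x
    have := @ht x
    simp at this ⊢
    tauto
  · intro t ht
    simp only [Finset.mem_powerset] at ht
    have e1 : (t ∪ B) \ B = t := by
      ext x
      have := @ht x
      simp at this ⊢
      tauto
    have e2 : Bᶜ \ t = (t ∪ B)ᶜ := by
      ext x
      simp
      tauto
    rw [e1, e2, Finset.prod_mul_distrib, Finset.prod_const]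
    ring

lemma union_bound (s : Finset V) (f : V → ℝ) (h0 : ∀ u, 0 ≤ f u) (h1 : ∀ u, f u ≤ 1) :
    1 - ∏ u ∈ s, (1 - f u) ≤ ∑ u ∈ s, f u := by
  induction s using Finset.induction_on with
  | empty => simp
  | insert a s ha ih =>
    rw [Finset.prod_insert ha, Finset.sum_insert ha]
    have : ∏ u ∈ s, (1 - f u) ≤ 1 :=
        Finset.prod_le_one (fun u _ => by linarith [h1 u]) (fun u _ => by linarith [h0 u])
    nlinarith [h0 a]

lemma sum_step_exp (G : SimpleGraph V) (B : Finset V) :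
    ∑ B' : Finset V, stepOfQ (edgeForceProb G B) B B' * Real.exp 1 ^ (B' \ B).card
      ≤ Real.exp (2 * (B.card : ℝ) ^ 2) := by
  rw [sum_stepOfQ]
  have he : Real.exp 1 ≤ 3 := by linarith [Real.exp_one_lt_d9]
  have he1 : 1 ≤ Real.exp 1 := Real.one_le_exp zero_le_one
  have hprod : ∀ v, 0 ≤ ∏ u ∈ B, (1 - edgeForceProb G B u v) := fun v =>
    Finset.prod_nonneg fun u _ => by linarith [edgeForceProb_le_one G B u v]
  have hprod1 : ∀ v, ∏ u ∈ B, (1 - edgeForceProb G B u v) ≤ 1 := fun v =>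
    Finset.prod_le_one (fun u _ => by linarith [edgeForceProb_le_one G B u v])
      (fun u _ => by linarith [edgeForceProb_nonneg G B u v])
  calc _ ≤ ∏ v ∈ Bᶜ, Real.exp (2 * ∑ u ∈ B, edgeForceProb G B u v) := by
        apply Finset.prod_le_prod
        · intro v _
          have := hprod v
          have := hprod1 v
          have : 0 ≤ Real.exp 1 * (1 - ∏ u ∈ B, (1 - edgeForceProb G B u v)) :=
            mul_nonneg (by linarith) (by linarith)
          linarith
        · intro v _
          have h1 := union_bound B (fun u => edgeForceProb G B u v)
            (fun u => edgeForceProb_nonneg G B u v) (fun u => edgeForceProb_le_one G B u v)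
          have h2 := hprod1 v
          have h3 := Real.add_one_le_exp (2 * ∑ u ∈ B, edgeForceProb G B u v)
          nlinarith
    _ = Real.exp (2 * ∑ u ∈ B, ∑ v ∈ Bᶜ, edgeForceProb G B u v) := by
        rw [← Real.exp_sum, ← Finset.mul_sum, Finset.sum_comm]
    _ ≤ _ := by
        apply Real.exp_le_exp.2
        have : ∑ u ∈ B, ∑ v ∈ Bᶜ, edgeForceProb G B u v ≤ ∑ u ∈ B, (B.card : ℝ) :=
          Finset.sum_le_sum fun u _ => sum_edgeForceProb_le G B u
        rw [Finset.sum_const, nsmul_eq_mul] at this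
        nlinarith

lemma sum_step_one (q : V → V → ℝ) (B : Finset V) :
    ∑ B' : Finset V, stepOfQ q B B' = 1 := by
  have := sum_stepOfQ q B 1
  simpa using this

/-- Probability of being all blue after `ℓ` further rounds, given the history. -/
noncomputable def W (G : SimpleGraph V) (hist : List (Finset V)) (ℓ : ℕ) : ℝ :=
  ∑ f : Fin ℓ → Finset V,
    if Finset.univ ⊆ (hist ++ List.ofFn f).getLastD ∅ then
      seqProbAux (stdStep G) hist (List.ofFn f) else 0

lemma W_zero (G : SimpleGraph V) (hist : List (Finset V)) :
    W G hist 0 = if Finset.univ ⊆ hist.getLastD ∅ then 1 else 0 := by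
  simp [W, seqProbAux]

lemma W_succ (G : SimpleGraph V) (hist : List (Finset V)) (ℓ : ℕ) :
    W G hist (ℓ + 1) = ∑ B' : Finset V,
      stepOfQ (edgeForceProb G (hist.getLastD ∅)) (hist.getLastD ∅) B' *
        W G (hist ++ [B']) ℓ := by
  unfold W
  rw [← (Fin.consEquiv (fun _ : Fin (ℓ + 1) => Finset V)).sum_comp, Fintype.sum_prod_type]
  apply Finset.sum_congr rfl
  intro B' _
  rw [Finset.mul_sum]
  apply Finset.sum_congr rfl
  intro f _
  have hc : List.ofFn ((Fin.consEquiv (fun _ : Fin (ℓ + 1) => Finset V)) (B', f)) =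
      B' :: List.ofFn f := List.ofFn_cons B' f
  rw [hc]
  simp only [seqProbAux, List.append_assoc, List.singleton_append, mul_ite, mul_zero]
  rfl

lemma W_mem (G : SimpleGraph V) (ℓ : ℕ) : ∀ hist : List (Finset V),
    0 ≤ W G hist ℓ ∧ W G hist ℓ ≤ 1 := by
  induction ℓ with
  | zero => intro hist; rw [W_zero]; split_ifs <;> norm_num
  | succ ℓ ih =>
    intro hist
    rw [W_succ]
    have hn := stepOfQ_nonneg (edgeForceProb_nonneg G (hist.getLastD ∅))
      (edgeForceProb_le_one G (hist.getLastD ∅)) (hist.getLastD ∅)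
    constructor
    · exact Finset.sum_nonneg fun B' _ => mul_nonneg (hn B') (ih _).1
    · rw [← sum_step_one (edgeForceProb G (hist.getLastD ∅)) (hist.getLastD ∅)]
      apply Finset.sum_le_sum
      intro B' _
      exact mul_le_of_le_one_right (hn B') (ih _).2

lemma W_bound (G : SimpleGraph V) (L : ℝ) (hL : 1 ≤ L) (ℓ : ℕ) :
    ∀ (hist : List (Finset V)) (x : ℝ), L ≤ x → ((hist.getLastD ∅).card : ℝ) ≤ x →
      (8 * x) ^ (2 ^ ℓ) ≤ (Fintype.card V : ℝ) → W G hist ℓ ≤ ℓ * Real.exp (-3 * L) := by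
  induction ℓ with
  | zero =>
    intro hist x hx hB hN
    rw [W_zero, if_neg]
    · simp
    · intro h
      have h2 := Finset.card_le_card h
      rw [Finset.card_univ] at h2
      have h3 : (Fintype.card V : ℝ) ≤ ((hist.getLastD ∅).card : ℝ) := by exact_mod_cast h2
      simp only [pow_zero, pow_one] at hN
      linarith
  | succ ℓ ih =>
    intro hist x hx hB hN
    rw [W_succ]
    set B := hist.getLastD ∅ with hBdef
    have hn := stepOfQ_nonneg (edgeForceProb_nonneg G B) (edgeForceProb_le_one G B) B
    have key : ∀ B' : Finset V, stepOfQ (edgeForceProb G B) B B' * W G (hist ++ [B']) ℓ ≤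
        stepOfQ (edgeForceProb G B) B B' * (ℓ * Real.exp (-3 * L)) +
        (stepOfQ (edgeForceProb G B) B B' * Real.exp 1 ^ (B' \ B).card) *
          Real.exp (x - 8 * x ^ 2) := by
      intro B'
      rw [mul_assoc, ← mul_add]
      apply mul_le_mul_of_nonneg_left _ (hn B')
      by_cases hc : (B'.card : ℝ) ≤ 8 * x ^ 2
      · have := ih (hist ++ [B']) (8 * x ^ 2) (by nlinarith) (by simpa using hc) (by
          have e : (8 * (8 * x ^ 2)) = (8 * x) ^ 2 := by ring
          rw [e, ← pow_mul, ← pow_succ']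
          exact hN)
        have : 0 ≤ Real.exp 1 ^ (B' \ B).card * Real.exp (x - 8 * x ^ 2) := by positivity
        linarith
      · push Not at hc
        have h1 := (W_mem G ℓ (hist ++ [B'])).2
        have h2 : 0 ≤ (ℓ : ℝ) * Real.exp (-3 * L) := by positivity
        have h3 : 1 ≤ Real.exp 1 ^ (B' \ B).card * Real.exp (x - 8 * x ^ 2) := by
          rw [← Real.exp_nat_mul, ← Real.exp_add]
          apply Real.one_le_exp
          have h4 : B'.card ≤ (B' \ B).card + B.card := by
            have := Finset.le_card_sdiff B B'
            omega
          have h5 : (B'.card : ℝ) ≤ (B' \ B).card + B.card := by exact_mod_cast h4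
          linarith
        linarith
    refine (Finset.sum_le_sum fun B' _ => key B').trans ?_
    rw [Finset.sum_add_distrib, ← Finset.sum_mul, ← Finset.sum_mul, sum_step_one, one_mul]
    have h1 := sum_step_exp G B
    have h2 : Real.exp (2 * (B.card : ℝ) ^ 2) * Real.exp (x - 8 * x ^ 2) ≤
        Real.exp (-3 * L) := by
      rw [← Real.exp_add]
      apply Real.exp_le_exp.2
      have : (B.card : ℝ) ^ 2 ≤ x ^ 2 := by gcongr
      nlinarith
    have h3 := mul_le_mul_of_nonneg_right h1 (Real.exp_pos (x - 8 * x ^ 2)).le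
    push_cast
    linarith

lemma probAllBlue_eq (G : SimpleGraph V) (S : Finset V) (ℓ : ℕ) :
    probAllBlue G S ℓ = W G [S] ℓ := by
  unfold probAllBlue probForced trajEventProb W
  apply Finset.sum_congr rfl
  intro f _
  simp only [List.singleton_append]
  congr

lemma erProb_nonneg (n : ℕ) (p : ℝ) (h0 : 0 ≤ p) (h1 : p ≤ 1) (G : SimpleGraph (Fin n)) :
    0 ≤ erProb n p G := by
  unfold erProb
  have : 0 ≤ 1 - p := by linarith
  positivity

lemma sum_erProb_le (n : ℕ) (p : ℝ) (h0 : 0 ≤ p) (h1 : p ≤ 1) :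
    ∑ G : SimpleGraph (Fin n), erProb n p G ≤ 1 := by
  have hp1 : 0 ≤ 1 - p := by linarith
  set E := (⊤ : SimpleGraph (Fin n)).edgeFinset with hE
  have hcard : E.card = n.choose 2 := by
    rw [hE, SimpleGraph.card_edgeFinset_top_eq_card_choose_two, Fintype.card_fin]
  have hs : ∑ s ∈ E.powerset, p ^ s.card * (1 - p) ^ (E.card - s.card) = 1 := by
    rw [Finset.sum_pow_mul_eq_add_pow]; simp
  rw [← hs]
  have : ∀ G : SimpleGraph (Fin n), erProb n p G =
      p ^ G.edgeFinset.card * (1 - p) ^ (E.card - G.edgeFinset.card) := by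
    intro G
    unfold erProb
    rw [hcard, Set.ncard_eq_toFinset_card']
    simp [SimpleGraph.edgeFinset]
  simp_rw [this]
  rw [← Finset.sum_image (f := fun s : Finset (Sym2 (Fin n)) =>
      p ^ s.card * (1 - p) ^ (E.card - s.card)) (s := Finset.univ)
      (g := fun G : SimpleGraph (Fin n) => G.edgeFinset)]
  · apply Finset.sum_le_sum_of_subset_of_nonneg
    · intro s hs
      simp only [Finset.mem_image, Finset.mem_univ, true_and] at hs
      obtain ⟨G, rfl⟩ := hs
      rw [Finset.mem_powerset, hE, SimpleGraph.edgeFinset_subset_edgeFinset]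
      exact le_top
    · intro s _ _
      positivity
  · intro G _ G' _ h
    simpa using h

lemma prPZFwithin_nonneg (n : ℕ) (p : ℝ) (h0 : 0 ≤ p) (h1 : p ≤ 1) (v : Fin n) (ℓ : ℕ) :
    0 ≤ prPZFwithin n p v ℓ := by
  unfold prPZFwithin
  apply Finset.sum_nonneg
  intro G _
  rw [probAllBlue_eq]
  exact mul_nonneg (erProb_nonneg n p h0 h1 G) (W_mem G ℓ _).1

lemma prPZFwithin_le (n : ℕ) (p : ℝ) (h0 : 0 ≤ p) (h1 : p ≤ 1) (v : Fin n) (ℓ : ℕ)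
    (L : ℝ) (hL : 1 ≤ L) (hN : (8 * L) ^ (2 ^ ℓ) ≤ (n : ℝ)) :
    prPZFwithin n p v ℓ ≤ ℓ * Real.exp (-3 * L) := by
  unfold prPZFwithin
  have hb : ∀ G : SimpleGraph (Fin n), probAllBlue G {v} ℓ ≤ ℓ * Real.exp (-3 * L) := by
    intro G
    rw [probAllBlue_eq]
    apply W_bound G L hL ℓ _ L le_rfl _ (by simpa using hN)
    simpa using hL
  calc _ ≤ ∑ G : SimpleGraph (Fin n), erProb n p G * (ℓ * Real.exp (-3 * L)) :=
        Finset.sum_le_sum fun G _ =>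
          mul_le_mul_of_nonneg_left (hb G) (erProb_nonneg n p h0 h1 G)
    _ = (∑ G : SimpleGraph (Fin n), erProb n p G) * (ℓ * Real.exp (-3 * L)) := by
        rw [Finset.sum_mul]
    _ ≤ _ := mul_le_of_le_one_left (by positivity) (sum_erProb_le n p h0 h1)

end PZF

/-- The number of rounds used: `log₂ (ln N) - log₂ (ln (8 ln N))`, as a function of `ln ln N`. -/
noncomputable def roundsY (N : ℝ) : ℝ :=
  (Real.log (Real.log N) - Real.log (Real.log 8 + Real.log (Real.log N))) / Real.log 2

lemma logb_logb_eq (N : ℝ) (hN : 1 < N) : Real.logb 2 (Real.logb 2 N) =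
    (Real.log (Real.log N) - Real.log (Real.log 2)) / Real.log 2 := by
  have h2 : 0 < Real.log 2 := Real.log_pos (by norm_num)
  unfold Real.logb
  rw [Real.log_div (Real.log_pos hN).ne' h2.ne']

lemma rounds_aux : Tendsto (fun s : ℝ => Real.log (Real.log 8 + s) / s) atTop (nhds 0) := by
  have h1 : Tendsto (fun x : ℝ => Real.log x / x) atTop (nhds 0) :=
    Real.isLittleO_log_id_atTop.tendsto_div_nhds_zero
  have h2 : Tendsto (fun s : ℝ => Real.log 8 + s) atTop atTop :=
    tendsto_atTop_add_const_left _ _ tendsto_id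
  have h3 := h1.comp h2
  have h4 : Tendsto (fun s : ℝ => (Real.log 8 / s + 1)) atTop (nhds 1) := by
    have := (tendsto_const_nhds (x := Real.log 8)).div_atTop (tendsto_id (α := ℝ) (x := atTop))
    simpa using this.add_const 1
  have h5 := h3.mul h4
  rw [zero_mul] at h5
  refine h5.congr' ?_
  filter_upwards [eventually_gt_atTop 0] with s hs
  have : 0 < Real.log 8 := Real.log_pos (by norm_num)
  simp only [Function.comp]
  have : Real.log 8 + s ≠ 0 := by positivity
  field_simp

theorem pzf_lower_bound_dense
    (p : ℕ → ℝ) (hp : ∀ n, 0 ≤ p n ∧ p n ≤ 1)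
    (hplb : ∀ᶠ n : ℕ in atTop, 1 / Real.log n ^ 2 ≤ p n)
    (v : (n : ℕ) → Fin (n + 1)) :
    ∃ e : ℕ → ℝ,
      Tendsto e atTop (nhds 0) ∧
      Tendsto
        (fun n : ℕ => (n : ℝ) *
          PZF.prPZFwithin (n + 1) (p (n + 1)) (v n)
            (⌈(1 + e n) * Real.logb 2 (Real.logb 2 ((n : ℝ) + 1))⌉₊ - 1))
        atTop (nhds 0) := by
  have hl2 : 0 < Real.log 2 := Real.log_pos (by norm_num)
  have hl8 : 0 < Real.log 8 := Real.log_pos (by norm_num)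
  have hNt : Tendsto (fun n : ℕ => (n : ℝ) + 1) atTop atTop :=
    tendsto_atTop_add_const_right _ _ tendsto_natCast_atTop_atTop
  have hLt : Tendsto (fun n : ℕ => Real.log ((n : ℝ) + 1)) atTop atTop :=
    Real.tendsto_log_atTop.comp hNt
  have hst : Tendsto (fun n : ℕ => Real.log (Real.log ((n : ℝ) + 1))) atTop atTop :=
    Real.tendsto_log_atTop.comp hLt
  refine ⟨fun n => roundsY ((n : ℝ) + 1) / Real.logb 2 (Real.logb 2 ((n : ℝ) + 1)) - 1, ?_, ?_⟩
  · have hA : Tendsto (fun s : ℝ => (1 - Real.log (Real.log 8 + s) / s) /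
        (1 - Real.log (Real.log 2) / s) - 1) atTop (nhds 0) := by
      have h1 := rounds_aux.const_sub 1
      have h2 := ((tendsto_const_nhds (x := Real.log (Real.log 2))).div_atTop
        (tendsto_id (α := ℝ) (x := atTop))).const_sub 1
      have h3 := (h1.div h2 (by norm_num)).sub_const 1
      simpa using h3
    refine (hA.comp hst).congr' ?_
    filter_upwards [hNt.eventually_gt_atTop 1, hst.eventually_gt_atTop 0] with n h1 hs
    simp only [Function.comp]
    rw [logb_logb_eq _ h1, roundsY, div_div_div_cancel_right₀ hl2.ne',
      one_sub_div hs.ne', one_sub_div hs.ne', div_div_div_cancel_right₀ hs.ne']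
  · have hub : Tendsto (fun n : ℕ => ((n : ℝ) + 1)⁻¹ / Real.log 2) atTop (nhds 0) := by
      simpa using hNt.inv_tendsto_atTop.div_const (Real.log 2)
    refine squeeze_zero' (Eventually.of_forall fun n => mul_nonneg (Nat.cast_nonneg n)
      (PZF.prPZFwithin_nonneg _ _ (hp _).1 (hp _).2 _ _)) ?_ hub
    have hy0 : ∀ᶠ s : ℝ in atTop, Real.log (Real.log 8 + s) / s < 1 :=
      rounds_aux.eventually_lt_const one_pos
    filter_upwards [hNt.eventually_gt_atTop 1, hLt.eventually_ge_atTop 1,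
      hst.eventually_gt_atTop (max 1 (Real.log (Real.log 2))), hst.eventually hy0]
      with n hN1 hL hs hy
    have hs1 := (le_max_left _ _).trans_lt hs
    have hs2 := (le_max_right _ _).trans_lt hs
    have hs0 : 0 < Real.log (Real.log ((n : ℝ) + 1)) := by linarith
    rw [div_lt_one hs0] at hy
    have hD : 0 < Real.logb 2 (Real.logb 2 ((n : ℝ) + 1)) := by
      rw [logb_logb_eq _ hN1]
      exact div_pos (by linarith) hl2
    rw [add_sub_cancel, div_mul_cancel₀ _ hD.ne']
    have hY : 0 ≤ roundsY ((n : ℝ) + 1) := div_nonneg (by linarith) hl2.le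
    set N : ℝ := (n : ℝ) + 1 with hNdef
    set ℓ := ⌈roundsY N⌉₊ - 1 with hℓ
    have hℓY : (ℓ : ℝ) ≤ roundsY N := by
      rcases Nat.eq_zero_or_pos ⌈roundsY N⌉₊ with h | h
      · rw [hℓ, h]; simpa using hY
      · have := Nat.ceil_lt_add_one hY
        rw [hℓ, Nat.cast_sub h]
        push_cast
        linarith
    have hL0 : 0 < Real.log N := by linarith
    have hlog8L : Real.log (8 * Real.log N) = Real.log 8 + Real.log (Real.log N) :=
      Real.log_mul (by norm_num) hL0.ne'
    have hK0 : 0 < Real.log 8 + Real.log (Real.log N) := by linarith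
    have hpow : (2 : ℝ) ^ ℓ * (Real.log 8 + Real.log (Real.log N)) ≤ Real.log N := by
      rw [← Real.log_le_log_iff (by positivity) hL0, Real.log_mul (by positivity) hK0.ne',
        Real.log_pow]
      have : (ℓ : ℝ) * Real.log 2 ≤
          Real.log (Real.log N) - Real.log (Real.log 8 + Real.log (Real.log N)) := by
        rw [← le_div_iff₀ hl2]; exact hℓY
      linarith
    have hN : (8 * Real.log N) ^ (2 ^ ℓ) ≤ ((n + 1 : ℕ) : ℝ) := by
      push_cast
      rw [← hNdef, ← Real.log_le_log_iff (by positivity) (by linarith), Real.log_pow, hlog8L]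
      push_cast
      exact hpow
    have hmain := PZF.prPZFwithin_le (n + 1) (p (n + 1)) (hp _).1 (hp _).2 (v n) ℓ
      (Real.log N) hL hN
    have hexp : Real.exp (-3 * Real.log N) = (N ^ 3)⁻¹ := by
      rw [neg_mul, Real.exp_neg]
      congr 1
      have := Real.exp_nat_mul (Real.log N) 3
      rw [Real.exp_log (by linarith)] at this
      exact_mod_cast this
    have hℓN : (ℓ : ℝ) ≤ N / Real.log 2 := by
      refine hℓY.trans ?_
      apply div_le_div_of_nonneg_right _ hl2.le
      have h1 := Real.log_le_self hL0.le
      have h2 := Real.log_le_self (show 0 ≤ N by linarith)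
      have h3 : 0 ≤ Real.log (Real.log 8 + Real.log (Real.log N)) := by
        apply Real.log_nonneg; linarith
      linarith
    have hN0 : 0 < N := by linarith
    calc (n : ℝ) * PZF.prPZFwithin (n + 1) (p (n + 1)) (v n) ℓ
        ≤ N * (N / Real.log 2 * (N ^ 3)⁻¹) := by
          rw [hexp] at hmain
          have hnN : (n : ℝ) ≤ N := by linarith
          refine mul_le_mul hnN (hmain.trans ?_)
            (PZF.prPZFwithin_nonneg _ _ (hp _).1 (hp _).2 _ _) hN0.le
          gcongr
      _ = N⁻¹ / Real.log 2 := by field_simp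
end
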